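/- Let X be an infinite compact metrizable space. Then the space I(X) of idempotent probability measures on X, endowed with the weak* topology, is homeomorphic to the Hilbert cube Q = ∏_{i=1}^∞ [0, 1]. -/

import Mathlib

/-- An idempotent (Maslov) probability measure on a topological space `X` is a functional
`μ : C(X, ℝ) → ℝ` that is normalized on constants, shifts under addition of constants, and
turns pointwise maxima into maxima. -/
def IsIdemMeasure {X : Type*} [TopologicalSpace X] (μ : C(X, ℝ) → ℝ) : Prop :=
  (∀ c : ℝ, μ (ContinuousMap.const X c) = c) ∧
  (∀ (c : ℝ) (φ : C(X, ℝ)), μ (ContinuousMap.const X c + φ) = c + μ φ) ∧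
  (∀ φ ψ : C(X, ℝ), μ (φ ⊔ ψ) = max (μ φ) (μ ψ))

/-- The space `I(X)` of idempotent probability measures on `X`; as a subtype of the product
`(C(X, ℝ) → ℝ)` it automatically carries the weak* (pointwise convergence) topology. -/
abbrev IdemMeasure (X : Type*) [TopologicalSpace X] :=
  {μ : C(X, ℝ) → ℝ // IsIdemMeasure μ}

/-!
Snowflake the metric of `X`, so that the triangle inequality becomes strict, and fix an injective
dense sequence `x`. Evaluating an idempotent measure on the cones of slope `l` with apices `x i`
gives, up to an additive constant, an arbitrary `l`-Lipschitz sequence, hence a surjection `p_l`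
of `I(X)` onto the compact set `Q_l` of `l`-Lipschitz sequences vanishing at `0`. It determines
the measure on `l`-Lipschitz functions, so that all the `p_l` together separate points.

Given the first terms of a sequence in `Q_l`, the next one ranges over a McShane–Whitney interval,
which by strictness is never degenerate; the relative positions in these intervals identify `Q_l`
with the Hilbert cube.

For `l ≤ l'`, `p_l` is nearly the composition of `p_l'` with the sup-convolution by `l d`. This
sup-convolution, restricted to finitely many terms, is a uniform limit of homeomorphisms: when the
cost is lowered in a single column, it changes one coordinate only, and collapses an initial
segment of its interval; squeezing that segment instead gives a homeomorphism. Strictness ensures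
that one column at a time can be lowered while keeping a triangle inequality, as long as `l' / l`
is close to `1`.

Thus each `p_l` is a uniform limit of homeomorphisms composed with `p_l'`, with `l'` arbitrarily
large, and Bing's shrinking argument makes `p_1` a uniform limit of homeomorphisms `I(X) → Q_1`.
-/

section Development

open Set Topology Filter
open scoped NNReal

section BingShrinking

variable {Y Z W : Type*} [TopologicalSpace Y] [TopologicalSpace Z] [TopologicalSpace W]

/-- The maps `Y → W` obtained from `p : Y → Z` by identifying `Z` with `W` in all possible ways.
That `p ∈ closure (homeomorphOrbit q Z)` says that `p` factors through `q`, up to arbitrarily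
small error, by homeomorphisms. -/
def homeomorphOrbit (p : C(Y, Z)) (W : Type*) [TopologicalSpace W] : Set C(Y, W) :=
  range fun h : Z ≃ₜ W => (h : C(Z, W)).comp p

theorem self_mem_homeomorphOrbit (p : C(Y, Z)) : p ∈ homeomorphOrbit p Z :=
  ⟨Homeomorph.refl Z, rfl⟩

theorem closure_homeomorphOrbit_subset {Z' : Type*} [TopologicalSpace Z'] {p : C(Y, Z)}
    {q : C(Y, Z')} (hpq : p ∈ closure (homeomorphOrbit q Z)) :
    closure (homeomorphOrbit p W) ⊆ closure (homeomorphOrbit q W) := by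
  refine closure_minimal ?_ isClosed_closure
  rintro _ ⟨h, rfl⟩
  refine map_mem_closure (ContinuousMap.continuous_postcomp (h : C(Z, W))) hpq ?_
  rintro _ ⟨h', rfl⟩
  exact ⟨h'.trans h, rfl⟩

theorem eq_of_mem_closure_homeomorphOrbit [T2Space W] {p : C(Y, W)} {q : C(Y, Z)}
    (hpq : p ∈ closure (homeomorphOrbit q W)) {y y' : Y} (h : q y = q y') : p y = p y' := by
  have hclosed : IsClosed {f : C(Y, W) | f y = f y'} :=
    isClosed_eq (continuous_eval_const y) (continuous_eval_const y')
  refine closure_minimal ?_ hclosed hpq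
  rintro _ ⟨g, rfl⟩
  exact congrArg g h

variable [CompactSpace Y]

theorem isOpen_setOf_fibers_subset [T2Space Z] {U : Set (Y × Y)} (hU : IsOpen U) :
    IsOpen {F : C(Y, Z) | ∀ y y', F y = F y' → (y, y') ∈ U} := by
  have hdiag : IsOpen {w : Z × Z | w.1 ≠ w.2} := isOpen_ne_fun continuous_fst continuous_snd
  have hsquare : Continuous fun F : C(Y, Z) => F.prodMap F := by
    refine ContinuousMap.continuous_of_continuous_uncurry _ ?_
    change Continuous fun w : C(Y, Z) × (Y × Y) => (w.1 w.2.1, w.1 w.2.2)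
    fun_prop
  convert (ContinuousMap.isOpen_setOfPred_mapsTo hU.isClosed_compl.isCompact hdiag).preimage
    hsquare using 1
  ext F
  simp only [mem_ofPred_eq, mem_preimage, MapsTo, mem_compl_iff, Prod.forall,
    ContinuousMap.prodMap_apply, Prod.map_apply, ne_eq, not_imp_not]

theorem isClosed_setOf_surjective [T1Space Z] :
    IsClosed {F : C(Y, Z) | Function.Surjective F} := by
  have hmissed (z : Z) : IsOpen {F : C(Y, Z) | MapsTo F univ {z}ᶜ} :=
    ContinuousMap.isOpen_setOfPred_mapsTo isCompact_univ isOpen_compl_singleton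
  convert isClosed_iInter fun z => (hmissed z).isClosed_compl
  ext F
  simp [Function.Surjective, MapsTo]

/-- Bing's shrinking argument: by Baire, a generic element of `closure 𝓕` has its fibers
controlled by every `U j`. -/
theorem exists_injective_mem_closure {κ : Type*} [Countable κ] {Z : Type*} [MetricSpace Z]
    [CompleteSpace Z] {𝓕 : Set C(Y, Z)} (hne : 𝓕.Nonempty) {U : κ → Set (Y × Y)}
    (hopen : ∀ j, IsOpen (U j)) (hdiag : ∀ y y', (∀ j, (y, y') ∈ U j) → y = y')
    (hdense : ∀ j, 𝓕 ⊆ closure {F ∈ 𝓕 | ∀ y y', F y = F y' → (y, y') ∈ U j}) :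
    ∃ F ∈ closure 𝓕, Function.Injective F := by
  let G (j : κ) : Set (closure 𝓕) := {F | ∀ y y', F.1 y = F.1 y' → (y, y') ∈ U j}
  have hGopen (j : κ) : IsOpen (G j) :=
    (isOpen_setOf_fibers_subset (hopen j)).preimage continuous_subtype_val
  have hGdense (j : κ) : Dense (G j) := by
    rw [Subtype.dense_iff]
    refine (closure_minimal (hdense j) isClosed_closure).trans (closure_mono ?_)
    exact fun F hF => ⟨⟨F, subset_closure hF.1⟩, hF.2, rfl⟩
  have : CompleteSpace (closure 𝓕) := isClosed_closure.completeSpace_coe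
  have : Nonempty (closure 𝓕) := hne.closure.to_subtype
  obtain ⟨F, hF⟩ := (dense_iInter_of_isOpen hGopen hGdense).nonempty
  exact ⟨F, F.2, fun y y' h => hdiag y y' fun j => mem_iInter.1 hF j y y' h⟩

theorem nonempty_homeomorph_of_mem_closure_homeomorphOrbit {Q : ℕ → Type*}
    [∀ n, TopologicalSpace (Q n)] [∀ n, CompactSpace (Q n)]
    [∀ n, TopologicalSpace.MetrizableSpace (Q n)] (p : ∀ n, C(Y, Q n))
    (hsurj : ∀ n, Function.Surjective (p n)) (hsep : ∀ y y', (∀ n, p n y = p n y') → y = y')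
    (hnear : ∀ n, p n ∈ closure (homeomorphOrbit (p (n + 1)) (Q n))) :
    Nonempty (Y ≃ₜ Q 0) := by
  let (n : ℕ) : MetricSpace (Q n) := TopologicalSpace.metrizableSpaceMetric (Q n)
  have hmono (k : ℕ) : Monotone fun m => closure (homeomorphOrbit (p m) (Q k)) :=
    monotone_nat_of_le_succ fun m => closure_homeomorphOrbit_subset (hnear m)
  have hfactor {k m : ℕ} (hkm : k ≤ m) {y y' : Y} (h : p m y = p m y') : p k y = p k y' :=
    eq_of_mem_closure_homeomorphOrbit
      (hmono k hkm (subset_closure (self_mem_homeomorphOrbit (p k)))) h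
  let 𝓕 : Set C(Y, Q 0) := ⋃ m, homeomorphOrbit (p m) (Q 0)
  let U (j : ℕ × ℕ) : Set (Y × Y) := {z | dist (p j.1 z.1) (p j.1 z.2) < 1 / ((j.2 : ℝ) + 1)}
  have hU (j : ℕ × ℕ) : IsOpen (U j) := isOpen_lt (by fun_prop) continuous_const
  have hdiag (y y' : Y) (h : ∀ j, (y, y') ∈ U j) : y = y' := by
    refine hsep y y' fun n => by_contra fun hne => ?_
    obtain ⟨j, hj⟩ := exists_nat_one_div_lt (dist_pos.2 hne)
    exact (h (n, j)).not_gt hj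
  have hdense (j : ℕ × ℕ) : 𝓕 ⊆ closure {F ∈ 𝓕 | ∀ y y', F y = F y' → (y, y') ∈ U j} := by
    refine iUnion_subset fun m => subset_closure.trans <|
      (hmono 0 (le_max_left m j.1)).trans (closure_mono ?_)
    rintro _ ⟨h, rfl⟩
    refine ⟨mem_iUnion.2 ⟨_, h, rfl⟩, fun y y' hy => ?_⟩
    have heq : p j.1 y = p j.1 y' := hfactor (le_max_right m j.1) (h.injective hy)
    simp only [U, mem_ofPred_eq, heq, dist_self]
    positivity
  have hne : 𝓕.Nonempty := ⟨p 0, mem_iUnion.2 ⟨0, self_mem_homeomorphOrbit (p 0)⟩⟩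
  obtain ⟨F, hF, hinj⟩ := exists_injective_mem_closure hne hU hdiag hdense
  have hFsurj : Function.Surjective F := by
    refine closure_minimal (iUnion_subset fun m => ?_) isClosed_setOf_surjective hF
    rintro _ ⟨h, rfl⟩
    exact h.surjective.comp (hsurj m)
  exact ⟨Continuous.homeoOfEquivCompactToT2 (f := Equiv.ofBijective F ⟨hinj, hFsurj⟩)
    F.continuous⟩

end BingShrinking

section Squeeze

/-- The nearest-point retraction of `ℝ` onto `[0, 1]`, as a real-valued function. -/
noncomputable def unitClamp (r : ℝ) : ℝ := max 0 (min 1 r)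

theorem unitClamp_nonneg (r : ℝ) : 0 ≤ unitClamp r := le_max_left _ _

theorem unitClamp_le_one (r : ℝ) : unitClamp r ≤ 1 := max_le zero_le_one (min_le_left _ _)

theorem unitClamp_of_nonpos {r : ℝ} (hr : r ≤ 0) : unitClamp r = 0 := by
  rw [unitClamp, min_eq_right (hr.trans zero_le_one), max_eq_left hr]

theorem unitClamp_of_one_le {r : ℝ} (hr : 1 ≤ r) : unitClamp r = 1 := by
  rw [unitClamp, min_eq_left hr, max_eq_right zero_le_one]

theorem unitClamp_of_mem_Icc {r : ℝ} (hr : r ∈ Icc (0 : ℝ) 1) : unitClamp r = r := by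
  rw [unitClamp, min_eq_right hr.2, max_eq_right hr.1]

theorem le_unitClamp {r : ℝ} (hr : r ≤ 1) : r ≤ unitClamp r := by
  rw [unitClamp, min_eq_right hr]
  exact le_max_right _ _

theorem unitClamp_le {r : ℝ} (hr : 0 ≤ r) : unitClamp r ≤ r := max_le hr (min_le_right _ _)

@[fun_prop]
theorem continuous_unitClamp : Continuous unitClamp := by
  unfold unitClamp
  fun_prop

theorem unitClamp_add_mul_sub {k : ℝ} (hk : -1 ≤ k) (r : ℝ) :
    unitClamp (r + k * (r - unitClamp r)) = unitClamp r := by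
  rcases le_total r 0 with h0 | h0
  · rw [unitClamp_of_nonpos h0, unitClamp_of_nonpos (by nlinarith)]
  rcases le_total r 1 with h1 | h1
  · rw [unitClamp_of_mem_Icc ⟨h0, h1⟩, sub_self, mul_zero, add_zero,
      unitClamp_of_mem_Icc ⟨h0, h1⟩]
  · rw [unitClamp_of_one_le h1, unitClamp_of_one_le (by nlinarith)]

/-- For `a' ≤ a`, the piecewise linear homeomorphism of `ℝ` that compresses `[a', a + s]` onto
`[a, a + s]`, fixes `[a + s, ∞)` and translates `(-∞, a']` onto `(-∞, a]`. For small `s` it is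
close to `max t a` on `[a', ∞)`. -/
noncomputable def squeeze (s a' a t : ℝ) : ℝ :=
  t + (a - a') * unitClamp ((a + s - t) / (a - a' + s))

/-- The inverse of `squeeze s a' a`. -/
noncomputable def unsqueeze (s a' a u : ℝ) : ℝ :=
  u - (a - a') * unitClamp ((a + s - u) / s)

variable {s a' a t : ℝ}

theorem squeeze_add_const (s a' a t x : ℝ) :
    squeeze s (a' + x) (a + x) (t + x) = squeeze s a' a t + x := by
  unfold squeeze
  ring_nf

theorem unsqueeze_squeeze (hs : 0 < s) (h : a' ≤ a) (t : ℝ) :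
    unsqueeze s a' a (squeeze s a' a t) = t := by
  have hd : 0 < a - a' + s := by linarith
  set r := (a + s - t) / (a - a' + s) with hr
  have hu : (a + s - squeeze s a' a t) / s = r + (a - a') / s * (r - unitClamp r) := by
    rw [squeeze, ← hr]
    have : a + s - t = r * (a - a' + s) := by rw [hr]; field_simp
    field_simp
    linarith
  rw [unsqueeze, hu, unitClamp_add_mul_sub, squeeze, ← hr, add_sub_cancel_right]
  exact (neg_one_lt_zero.le).trans (div_nonneg (sub_nonneg.2 h) hs.le)

theorem squeeze_unsqueeze (hs : 0 < s) (h : a' ≤ a) (u : ℝ) :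
    squeeze s a' a (unsqueeze s a' a u) = u := by
  have hd : 0 < a - a' + s := by linarith
  set r := (a + s - u) / s with hr
  have ht : (a + s - unsqueeze s a' a u) / (a - a' + s) =
      r + -((a - a') / (a - a' + s)) * (r - unitClamp r) := by
    rw [unsqueeze, ← hr]
    have : a + s - u = r * s := by rw [hr]; field_simp
    field_simp
    linarith
  rw [squeeze, ht, unitClamp_add_mul_sub, unsqueeze, ← hr, sub_add_cancel]
  rw [neg_le_neg_iff, div_le_one hd]
  linarith

theorem self_le_squeeze (h : a' ≤ a) (t : ℝ) : t ≤ squeeze s a' a t :=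
  le_add_of_nonneg_right (mul_nonneg (sub_nonneg.2 h) (unitClamp_nonneg _))

theorem le_squeeze_iff (hs : 0 < s) (h : a' ≤ a) : a ≤ squeeze s a' a t ↔ a' ≤ t := by
  have hd : 0 < a - a' + s := by linarith
  unfold squeeze
  constructor
  · intro ha
    nlinarith [unitClamp_le_one ((a + s - t) / (a - a' + s))]
  · intro ha
    set r := (a + s - t) / (a - a' + s) with hr
    have hr1 : r ≤ 1 := (div_le_one hd).2 (by linarith)
    have hrd : r * (a - a' + s) = a + s - t := by rw [hr]; field_simp
    nlinarith [le_unitClamp hr1]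

theorem squeeze_le_of_add_le (hs : 0 < s) (h : a' ≤ a) {b : ℝ} (hb : a + s ≤ b) (ht : t ≤ b) :
    squeeze s a' a t ≤ b := by
  have hd : 0 < a - a' + s := by linarith
  unfold squeeze
  set r := (a + s - t) / (a - a' + s) with hr
  have hrd : r * (a - a' + s) = a + s - t := by rw [hr]; field_simp
  rcases le_total r 0 with h0 | h0
  · rwa [unitClamp_of_nonpos h0, mul_zero, add_zero]
  · nlinarith [unitClamp_le h0]

theorem abs_squeeze_sub_max_le (hs : 0 < s) (h : a' ≤ a) (ht : a' ≤ t) :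
    |squeeze s a' a t - max t a| ≤ s := by
  have hlower : max t a ≤ squeeze s a' a t :=
    max_le (self_le_squeeze h t) ((le_squeeze_iff hs h).2 ht)
  have hupper : squeeze s a' a t ≤ max t a + s := by
    refine squeeze_le_of_add_le hs h (add_le_add_left (le_max_right t a) s) ?_
    linarith [le_max_left t a]
  rw [abs_le]
  constructor <;> linarith

end Squeeze

section Cost

variable {ι : Type*} {c c' : ι → ι → ℝ} {s : Set ι} {g g' : ι → ℝ} {i j : ι}

/-- A cost function, not necessarily symmetric, that vanishes on the diagonal and satisfies the
triangle inequality strictly whenever the intermediate point differs from both endpoints. -/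
structure IsStrictCost (c : ι → ι → ℝ) : Prop where
  self (i : ι) : c i i = 0
  lt_add {i j k : ι} : j ≠ i → j ≠ k → c i k < c i j + c j k

theorem IsStrictCost.triangle (hc : IsStrictCost c) (i j k : ι) : c i k ≤ c i j + c j k := by
  rcases eq_or_ne j i with rfl | hi
  · rw [hc.self, zero_add]
  rcases eq_or_ne j k with rfl | hk
  · rw [hc.self, add_zero]
  exact (hc.lt_add hi hk).le

theorem IsStrictCost.const_mul (hc : IsStrictCost c) {m : ℝ} (hm : 0 < m) :
    IsStrictCost fun i j => m * c i j where
  self i := by rw [hc.self, mul_zero]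
  lt_add hi hk := by
    rw [← mul_add]
    exact mul_lt_mul_of_pos_left (hc.lt_add hi hk) hm

theorem IsStrictCost.comp (hc : IsStrictCost c) {κ : Type*} {e : κ → ι}
    (he : Function.Injective e) : IsStrictCost fun i j => c (e i) (e j) where
  self i := hc.self (e i)
  lt_add hi hk := hc.lt_add (he.ne hi) (he.ne hk)

/-- The real-valued functions that are `1`-Lipschitz on `s` with respect to the cost `c`. -/
def costLipschitzOn (c : ι → ι → ℝ) (s : Set ι) : Set (ι → ℝ) :=
  {g | ∀ i ∈ s, ∀ j ∈ s, g i - g j ≤ c i j}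

/-- The real-valued functions that are `1`-Lipschitz with respect to the cost `c`. -/
def costLipschitz (c : ι → ι → ℝ) : Set (ι → ℝ) := {g | ∀ i j, g i - g j ≤ c i j}

theorem costLipschitzOn_univ (c : ι → ι → ℝ) : costLipschitzOn c univ = costLipschitz c := by
  simp only [costLipschitzOn, costLipschitz, mem_univ, forall_const]

theorem isClosed_costLipschitz (c : ι → ι → ℝ) : IsClosed (costLipschitz c) := by
  simp only [costLipschitz, ofPred_forall]
  exact isClosed_iInter fun i => isClosed_iInter fun j =>
    isClosed_le (by fun_prop) continuous_const

theorem add_const_mem_costLipschitz (hg : g ∈ costLipschitz c) (x : ℝ) :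
    (fun i => g i + x) ∈ costLipschitz c := fun i j => by
  simpa only [add_sub_add_right_eq_sub] using hg i j

/-- The sup-convolution with `c` of the restriction of `g` to `s`. For `s` finite and nonempty, it
is the least value at `j` that is compatible with the values of `g` on `s` for a function Lipschitz
with respect to `c`. -/
noncomputable def supConv (c : ι → ι → ℝ) (s : Set ι) (g : ι → ℝ) (j : ι) : ℝ :=
  ⨆ i : s, (g i - c i j)

/-- The inf-convolution with `c` of the restriction of `g` to `s`. For `s` finite and nonempty, it
is the greatest value at `j` that is compatible with the values of `g` on `s` for a function
Lipschitz with respect to `c`. -/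
noncomputable def infConv (c : ι → ι → ℝ) (s : Set ι) (g : ι → ℝ) (j : ι) : ℝ :=
  ⨅ i : s, (g i + c j i)

theorem supConv_congr (h : EqOn g g' s) : supConv c s g j = supConv c s g' j :=
  iSup_congr fun i => by rw [h i.2]

theorem infConv_congr (h : EqOn g g' s) : infConv c s g j = infConv c s g' j :=
  iInf_congr fun i => by rw [h i.2]

theorem supConv_compl_update [DecidableEq ι] (c : ι → ι → ℝ) (g : ι → ℝ) (x : ℝ) :
    supConv c {j}ᶜ (Function.update g j x) j = supConv c {j}ᶜ g j :=
  supConv_congr fun _ hi => Function.update_of_ne hi _ _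

variable [Finite s]

theorem sub_le_supConv (hi : i ∈ s) : g i - c i j ≤ supConv c s g j :=
  le_ciSup (f := fun i : s => g i - c i j) (Finite.bddAbove_range _) ⟨i, hi⟩

variable [Nonempty s]

theorem supConv_le_iff {x : ℝ} : supConv c s g j ≤ x ↔ ∀ i ∈ s, g i - c i j ≤ x := by
  rw [supConv, ciSup_le_iff (Finite.bddAbove_range _), Subtype.forall]

theorem le_infConv_iff {x : ℝ} : x ≤ infConv c s g j ↔ ∀ i ∈ s, x ≤ g i + c j i := by
  rw [infConv, le_ciInf_iff (Finite.bddBelow_range _), Subtype.forall]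

@[fun_prop]
theorem continuous_supConv (c : ι → ι → ℝ) (s : Set ι) [Finite s] [Nonempty s] (j : ι) :
    Continuous fun g => supConv c s g j := by
  have := Fintype.ofFinite s
  simp only [supConv, ← Finset.sup'_univ_eq_ciSup]
  exact Continuous.finset_sup'_apply _ fun i _ => by fun_prop

@[fun_prop]
theorem continuous_infConv (c : ι → ι → ℝ) (s : Set ι) [Finite s] [Nonempty s] (j : ι) :
    Continuous fun g => infConv c s g j := by
  have := Fintype.ofFinite s
  simp only [infConv, ← Finset.inf'_univ_eq_ciInf]
  exact Continuous.finset_inf'_apply _ fun i _ => by fun_prop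

theorem supConv_add_const (c : ι → ι → ℝ) (g : ι → ℝ) (x : ℝ) :
    supConv c s (fun i => g i + x) j = supConv c s g j + x := by
  rw [supConv, supConv, ciSup_add (Finite.bddAbove_range _)]
  simp only [add_sub_right_comm]

theorem supConv_anti (h : ∀ i ∈ s, c i j ≤ c' i j) : supConv c' s g j ≤ supConv c s g j :=
  supConv_le_iff.2 fun i hi => (sub_le_sub_left (h i hi) _).trans (sub_le_supConv hi)

theorem abs_supConv_sub_supConv_le {ε : ℝ} (h : ∀ i ∈ s, |g i - g' i| ≤ ε) :
    |supConv c s g j - supConv c s g' j| ≤ ε := by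
  rw [abs_sub_le_iff, sub_le_iff_le_add', sub_le_iff_le_add', supConv_le_iff, supConv_le_iff]
  constructor <;> intro i hi
  · linarith [sub_le_supConv (c := c) (g := g') (j := j) hi, (abs_le.1 (h i hi)).2]
  · linarith [sub_le_supConv (c := c) (g := g) (j := j) hi, (abs_le.1 (h i hi)).1]

theorem supConv_eq_self (hj : j ∈ s) (hc : c j j = 0) (h : ∀ i ∈ s, g i - g j ≤ c i j) :
    supConv c s g j = g j := by
  refine le_antisymm (supConv_le_iff.2 fun i hi => sub_le_comm.1 (h i hi)) ?_
  simpa only [hc, sub_zero] using sub_le_supConv (c := c) (g := g) (j := j) hj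

theorem supConv_supConv (hc' : ∀ i, c' i i = 0) (hle : ∀ i j, c i j ≤ c' i j)
    (htri : ∀ i j k, c i k ≤ c i j + c j k) :
    supConv c s (supConv c' s g) j = supConv c s g j := by
  apply le_antisymm <;> rw [supConv_le_iff] <;> intro i hi
  · rw [sub_le_iff_le_add, supConv_le_iff]
    intro k hk
    linarith [sub_le_supConv (c := c) (g := g) (j := j) hk, hle k i, htri k i j]
  · have hself : g i ≤ supConv c' s g i := by
      simpa only [hc', sub_zero] using sub_le_supConv (c := c') (g := g) (j := i) hi
    exact (sub_le_sub_right hself _).trans (sub_le_supConv hi)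

theorem supConv_insert (c : ι → ι → ℝ) (g : ι → ℝ) (i j : ι) :
    supConv c (insert i s) g j = max (g i - c i j) (supConv c s g j) :=
  eq_of_forall_ge_iff fun x => by simp only [supConv_le_iff, max_le_iff, forall_mem_insert]

/-- The McShane–Whitney extension theorem, one point at a time. -/
theorem mem_costLipschitzOn_insert_iff (hc : c j j = 0) :
    g ∈ costLipschitzOn c (insert j s) ↔
      g ∈ costLipschitzOn c s ∧ supConv c s g j ≤ g j ∧ g j ≤ infConv c s g j := by
  rw [supConv_le_iff, le_infConv_iff]
  constructor
  · intro hg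
    exact ⟨fun i hi k hk => hg i (.inr hi) k (.inr hk),
      fun i hi => sub_le_comm.1 (hg i (.inr hi) j (.inl rfl)),
      fun i hi => sub_le_iff_le_add'.1 (hg j (.inl rfl) i (.inr hi))⟩
  · rintro ⟨hg, hlower, hupper⟩ i (rfl | hi) k (rfl | hk)
    · rw [sub_self, hc]
    · exact sub_le_iff_le_add'.2 (hupper k hk)
    · exact sub_le_comm.1 (hlower i hi)
    · exact hg i hi k hk

theorem mem_costLipschitz_iff_compl [Finite ι] [Nonempty ({j}ᶜ : Set ι)] (hc : c j j = 0) :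
    g ∈ costLipschitz c ↔ g ∈ costLipschitzOn c {j}ᶜ ∧
      supConv c {j}ᶜ g j ≤ g j ∧ g j ≤ infConv c {j}ᶜ g j := by
  rw [← mem_costLipschitzOn_insert_iff hc, insert_eq, union_compl_self, costLipschitzOn_univ]

theorem exists_pos_forall_supConv_add_le_infConv (hc : IsStrictCost c) (hj : j ∉ s) :
    ∃ σ > 0, ∀ g ∈ costLipschitzOn c s, supConv c s g j + σ ≤ infConv c s g j := by
  obtain ⟨m, hm⟩ := Finite.exists_min fun z : s × s => c z.1 j + c j z.2 - c z.1 z.2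
  refine ⟨c m.1 j + c j m.2 - c m.1 m.2, sub_pos.2 (hc.lt_add ?_ ?_), fun g hg => ?_⟩
  · exact fun h => hj (h ▸ m.1.2)
  · exact fun h => hj (h ▸ m.2.2)
  rw [le_infConv_iff]
  intro k hk
  rw [← le_sub_iff_add_le, supConv_le_iff]
  intro i hi
  linarith [hg i hi k hk, hm (⟨i, hi⟩, ⟨k, hk⟩)]

end Cost

section NearHomeomorph

variable {ι : Type*} {c c' c'' : ι → ι → ℝ}

/-- A homeomorphism `h` of `ι → ℝ` is a cost homeomorphism if it commutes with the addition of
constants and restricts to a bijection from `costLipschitz c'` onto `costLipschitz c`. -/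
structure IsCostHomeo (c' c : ι → ι → ℝ) (h : (ι → ℝ) ≃ₜ (ι → ℝ)) : Prop where
  map_add_const (g : ι → ℝ) (x : ℝ) : h (fun i => g i + x) = fun i => h g i + x
  mem_iff (g : ι → ℝ) : h g ∈ costLipschitz c ↔ g ∈ costLipschitz c'

theorem IsCostHomeo.refl (c : ι → ι → ℝ) : IsCostHomeo c c (Homeomorph.refl _) where
  map_add_const _ _ := rfl
  mem_iff _ := Iff.rfl

theorem IsCostHomeo.trans {h k : (ι → ℝ) ≃ₜ (ι → ℝ)} (hh : IsCostHomeo c'' c' h)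
    (hk : IsCostHomeo c' c k) : IsCostHomeo c'' c (h.trans k) where
  map_add_const g x := by
    simp only [Homeomorph.trans_apply, hh.map_add_const, hk.map_add_const]
  mem_iff g := (hk.mem_iff (h g)).trans (hh.mem_iff g)

theorem IsCostHomeo.symm {h : (ι → ℝ) ≃ₜ (ι → ℝ)} (hh : IsCostHomeo c' c h) :
    IsCostHomeo c c' h.symm where
  map_add_const g x := by
    rw [Homeomorph.symm_apply_eq, hh.map_add_const]
    simp only [Homeomorph.apply_symm_apply]
  mem_iff g := by rw [← hh.mem_iff, Homeomorph.apply_symm_apply]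

/-- The sup-convolution with `c`, which maps `costLipschitz c'` to `costLipschitz c`, is
approximable by cost homeomorphisms, uniformly on `costLipschitz c'`. -/
def SupConvNearHomeo (c' c : ι → ι → ℝ) : Prop :=
  ∀ ε > 0, ∃ h : (ι → ℝ) ≃ₜ (ι → ℝ), IsCostHomeo c' c h ∧
    ∀ g ∈ costLipschitz c', ∀ i, |h g i - supConv c univ g i| ≤ ε

variable [Finite ι]

theorem SupConvNearHomeo.refl [Nonempty ι] (hc : ∀ i, c i i = 0) : SupConvNearHomeo c c := by
  refine fun ε hε => ⟨_, IsCostHomeo.refl c, fun g hg i => ?_⟩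
  rw [supConv_eq_self (mem_univ i) (hc i) fun k _ => hg k i]
  simpa using hε.le

theorem SupConvNearHomeo.trans [Nonempty ι] (h₁ : SupConvNearHomeo c'' c')
    (h₂ : SupConvNearHomeo c' c) (hc' : ∀ i, c' i i = 0) (hle : ∀ i j, c i j ≤ c' i j)
    (htri : ∀ i j k, c i k ≤ c i j + c j k) : SupConvNearHomeo c'' c := by
  intro ε hε
  obtain ⟨h, hh, hh_near⟩ := h₁ (ε / 2) (half_pos hε)
  obtain ⟨k, hk, hk_near⟩ := h₂ (ε / 2) (half_pos hε)
  refine ⟨h.trans k, hh.trans hk, fun g hg i => ?_⟩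
  have hconv : |supConv c univ (h g) i - supConv c univ g i| ≤ ε / 2 := by
    rw [← supConv_supConv (g := g) hc' hle htri]
    exact abs_supConv_sub_supConv_le fun i _ => hh_near g hg i
  calc |k (h g) i - supConv c univ g i|
      ≤ |k (h g) i - supConv c univ (h g) i| + |supConv c univ (h g) i - supConv c univ g i| :=
        abs_sub_le _ _ _
    _ ≤ ε / 2 + ε / 2 := add_le_add (hk_near (h g) ((hh.mem_iff g).2 hg) i) hconv
    _ = ε := add_halves ε

section Column

variable [DecidableEq ι] {j : ι} [Nonempty ({j}ᶜ : Set ι)] {s : ℝ}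

/-- The homeomorphism of `ι → ℝ` that changes only the `j`-th coordinate, squeezing the lower
McShane–Whitney bound for the cost `c'` onto the one for the cost `c`. -/
noncomputable def squeezeColumn (j : ι) [Nonempty ({j}ᶜ : Set ι)] (hs : 0 < s)
    (hle : ∀ i, c i j ≤ c' i j) : (ι → ℝ) ≃ₜ (ι → ℝ) where
  toFun g := Function.update g j (squeeze s (supConv c' {j}ᶜ g j) (supConv c {j}ᶜ g j) (g j))
  invFun g := Function.update g j (unsqueeze s (supConv c' {j}ᶜ g j) (supConv c {j}ᶜ g j) (g j))
  left_inv g := by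
    simp only [supConv_compl_update, Function.update_self, Function.update_idem,
      unsqueeze_squeeze hs (supConv_anti fun i _ => hle i), Function.update_eq_self]
  right_inv g := by
    simp only [supConv_compl_update, Function.update_self, Function.update_idem,
      squeeze_unsqueeze hs (supConv_anti fun i _ => hle i), Function.update_eq_self]
  continuous_toFun := by
    have hpos (g : ι → ℝ) : supConv c {j}ᶜ g j - supConv c' {j}ᶜ g j + s ≠ 0 :=
      (add_pos_of_nonneg_of_pos (sub_nonneg.2 (supConv_anti fun i _ => hle i)) hs).ne'
    unfold squeeze
    fun_prop (disch := assumption)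
  continuous_invFun := by
    unfold unsqueeze
    fun_prop

theorem squeezeColumn_apply_self (hs : 0 < s) (hle : ∀ i, c i j ≤ c' i j) (g : ι → ℝ) :
    squeezeColumn j hs hle g j =
      squeeze s (supConv c' {j}ᶜ g j) (supConv c {j}ᶜ g j) (g j) :=
  Function.update_self ..

theorem eqOn_squeezeColumn (hs : 0 < s) (hle : ∀ i, c i j ≤ c' i j) (g : ι → ℝ) :
    EqOn (squeezeColumn j hs hle g) g {j}ᶜ :=
  fun _ hi => Function.update_of_ne hi ..

theorem isCostHomeo_squeezeColumn (hs : 0 < s) (hle : ∀ i, c i j ≤ c' i j) (hc : c j j = 0)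
    (hc' : c' j j = 0) (heq : ∀ i k, k ≠ j → c i k = c' i k)
    (hgap : ∀ g ∈ costLipschitzOn c {j}ᶜ, supConv c {j}ᶜ g j + s ≤ infConv c {j}ᶜ g j) :
    IsCostHomeo c' c (squeezeColumn j hs hle) where
  map_add_const g x := by
    funext i
    rcases eq_or_ne i j with rfl | hi
    · simp only [squeezeColumn_apply_self, supConv_add_const, squeeze_add_const]
    · rw [eqOn_squeezeColumn hs hle _ hi, eqOn_squeezeColumn hs hle g hi]
  mem_iff g := by
    have hg_eq : EqOn (squeezeColumn j hs hle g) g {j}ᶜ := eqOn_squeezeColumn hs hle g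
    have hOn : squeezeColumn j hs hle g ∈ costLipschitzOn c {j}ᶜ ↔ g ∈ costLipschitzOn c' {j}ᶜ :=
      forall₂_congr fun i hi => forall₂_congr fun k hk => by
        rw [hg_eq hi, hg_eq hk, heq i k hk]
    have hOn' : g ∈ costLipschitzOn c' {j}ᶜ ↔ g ∈ costLipschitzOn c {j}ᶜ :=
      forall₂_congr fun i _ => forall₂_congr fun k hk => by rw [heq i k hk]
    have hinf : infConv c' {j}ᶜ g j = infConv c {j}ᶜ g j :=
      iInf_congr fun i => by rw [heq j i i.2]
    have hsup_le : supConv c' {j}ᶜ g j ≤ supConv c {j}ᶜ g j := supConv_anti fun i _ => hle i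
    rw [mem_costLipschitz_iff_compl hc, mem_costLipschitz_iff_compl hc', hOn, hOn', hinf,
      supConv_congr hg_eq, infConv_congr hg_eq, squeezeColumn_apply_self,
      le_squeeze_iff hs hsup_le]
    refine and_congr_right fun hg => and_congr_right fun _ => ?_
    exact ⟨(self_le_squeeze hsup_le _).trans, squeeze_le_of_add_le hs hsup_le (hgap g hg)⟩

theorem abs_squeezeColumn_sub_supConv_le (hs : 0 < s) (hle : ∀ i, c i j ≤ c' i j)
    (hc : ∀ i, c i i = 0) (hc' : c' j j = 0) (heq : ∀ i k, k ≠ j → c i k = c' i k)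
    {g : ι → ℝ} (hg : g ∈ costLipschitz c') (i : ι) :
    |squeezeColumn j hs hle g i - supConv c univ g i| ≤ s := by
  have : Nonempty ι := ⟨j⟩
  rcases eq_or_ne i j with rfl | hi
  · have hmax : supConv c univ g i = max (g i) (supConv c {i}ᶜ g i) := by
      rw [← union_compl_self {i}, ← insert_eq, supConv_insert, hc, sub_zero]
    rw [squeezeColumn_apply_self, hmax]
    exact abs_squeeze_sub_max_le hs (supConv_anti fun i _ => hle i)
      ((mem_costLipschitz_iff_compl hc').1 hg).2.1
  · rw [eqOn_squeezeColumn hs hle g hi,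
      supConv_eq_self (mem_univ i) (hc i) fun k _ => heq k i hi ▸ hg k i, sub_self, abs_zero]
    exact hs.le

end Column

theorem SupConvNearHomeo.of_eq_off_column [Nontrivial ι] (j : ι) (hc : IsStrictCost c)
    (hc' : c' j j = 0) (hle : ∀ i, c i j ≤ c' i j) (heq : ∀ i k, k ≠ j → c i k = c' i k) :
    SupConvNearHomeo c' c := by
  classical
  intro ε hε
  have : Nonempty ({j}ᶜ : Set ι) := nonempty_subtype.2 (exists_ne j)
  have hj : j ∉ ({j}ᶜ : Set ι) := notMem_compl_iff.2 (mem_singleton j)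
  obtain ⟨σ, hσ, hgap⟩ := exists_pos_forall_supConv_add_le_infConv hc hj
  have hs : 0 < min ε σ := lt_min hε hσ
  refine ⟨squeezeColumn j hs hle, isCostHomeo_squeezeColumn hs hle (hc.self j) hc' heq ?_, ?_⟩
  · exact fun g hg => (add_le_add_right (min_le_right ε σ) _).trans (hgap g hg)
  · exact fun g hg i => (abs_squeezeColumn_sub_supConv_le hs hle hc.self hc' heq hg i).trans
      (min_le_left ε σ)

theorem supConvNearHomeo_of_lt_add [Nontrivial ι] (hc : ∀ i, c i i = 0) (hc' : ∀ i, c' i i = 0)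
    (hle : ∀ i j, c i j ≤ c' i j) (hlt : ∀ i j k, j ≠ i → j ≠ k → c' i k < c i j + c j k) :
    SupConvNearHomeo c' c := by
  classical
  cases nonempty_fintype ι
  let C (S : Finset ι) (i j : ι) : ℝ := if j ∈ S then c i j else c' i j
  have hle_C (S : Finset ι) (i j : ι) : c i j ≤ C S i j ∧ C S i j ≤ c' i j := by
    by_cases hj : j ∈ S <;> simp [C, hj, hle]
  have hC (S : Finset ι) : IsStrictCost (C S) :=
    ⟨fun i => by simp [C, hc, hc'], fun hi hk => (hle_C S _ _).2.trans_lt <|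
      (hlt _ _ _ hi hk).trans_le (add_le_add (hle_C S _ _).1 (hle_C S _ _).1)⟩
  have hnear (S : Finset ι) : SupConvNearHomeo c' (C S) := by
    induction S using Finset.induction_on with
    | empty => exact SupConvNearHomeo.refl hc'
    | insert j S hj ih =>
      have heq (i k : ι) (hk : k ≠ j) : C (insert j S) i k = C S i k := by
        simp [C, hk]
      have hle_j (i : ι) : C (insert j S) i j ≤ C S i j := by
        simpa [C, hj] using hle i j
      have hle_insert (i k : ι) : C (insert j S) i k ≤ C S i k := by
        rcases eq_or_ne k j with rfl | hk
        exacts [hle_j i, (heq i k hk).le]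
      exact ih.trans (.of_eq_off_column j (hC _) ((hC S).self j) hle_j heq) (hC S).self hle_insert
        (hC _).triangle
  simpa [C] using hnear Finset.univ

theorem IsStrictCost.eventually_mul_lt_add (hc : IsStrictCost c) :
    ∀ᶠ r : ℝ in 𝓝 1, ∀ i j k, j ≠ i → j ≠ k → r * c i k < c i j + c j k := by
  simp only [eventually_all]
  intro i j k hi hk
  have hcont : ContinuousAt (fun r : ℝ => r * c i k) 1 := by fun_prop
  exact hcont.eventually_lt continuousAt_const (by simpa only [one_mul] using hc.lt_add hi hk)

theorem SupConvNearHomeo.const_mul [Nontrivial ι] (hc : IsStrictCost c) (hnonneg : ∀ i j, 0 ≤ c i j)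
    {l l' : ℝ} (hl : 0 < l) (hll' : l ≤ l') :
    SupConvNearHomeo (fun i j => l' * c i j) fun i j => l * c i j := by
  have hratio : 1 ≤ l' / l := (one_le_div hl).2 hll'
  have hroot : Tendsto (fun n : ℕ => (l' / l) ^ (n : ℝ)⁻¹) atTop (𝓝 1) := by
    simpa only [Real.rpow_zero] using tendsto_const_nhds.rpow
      tendsto_inv_atTop_nhds_zero_nat (.inl (zero_lt_one.trans_le hratio).ne')
  obtain ⟨n, hlt, hn⟩ :=
    ((hroot.eventually hc.eventually_mul_lt_add).and (eventually_ne_atTop 0)).exists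
  set r := (l' / l) ^ (n : ℝ)⁻¹
  have hr : 1 ≤ r := Real.one_le_rpow hratio (by positivity)
  have hrn : r ^ n * l = l' := by
    rw [Real.rpow_inv_natCast_pow (zero_le_one.trans hratio) hn, div_mul_cancel₀ _ hl.ne']
  have hstep (m : ℝ) (hm : 0 < m) :
      SupConvNearHomeo (fun i j => r * m * c i j) fun i j => m * c i j := by
    refine supConvNearHomeo_of_lt_add (hc.const_mul hm).self
      (hc.const_mul (by positivity)).self (fun i j => ?_) fun i j k hi hk => ?_
    · exact mul_le_mul_of_nonneg_right (le_mul_of_one_le_left hm.le hr) (hnonneg i j)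
    · nlinarith [hlt i j k hi hk]
  have hpow (k : ℕ) : SupConvNearHomeo (fun i j => r ^ k * l * c i j) fun i j => l * c i j := by
    induction k with
    | zero => simpa only [pow_zero, one_mul] using SupConvNearHomeo.refl (hc.const_mul hl).self
    | succ k ih =>
      have hk : 0 < r ^ k * l := by positivity
      rw [pow_succ', mul_assoc]
      refine (hstep _ hk).trans ih (hc.const_mul hk).self (fun i j => ?_) (hc.const_mul hl).triangle
      exact mul_le_mul_of_nonneg_right (le_mul_of_one_le_left hl.le (one_le_pow₀ hr)) (hnonneg i j)
  exact hrn ▸ hpow n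

end NearHomeomorph

section Pointed

variable {ι : Type*} {c c' : ι → ι → ℝ} {b : ι}

/-- The functions in `costLipschitz c` that vanish at the base point `b`. -/
def pointedCostLipschitz (c : ι → ι → ℝ) (b : ι) : Set (ι → ℝ) := {g ∈ costLipschitz c | g b = 0}

instance (c : ι → ι → ℝ) (b : ι) : CompactSpace (pointedCostLipschitz c b) := by
  have hclosed : IsClosed (pointedCostLipschitz c b) :=
    (isClosed_costLipschitz c).inter (isClosed_eq (continuous_apply b) continuous_const)
  have hsub : pointedCostLipschitz c b ⊆ univ.pi fun i => Icc (-c b i) (c i b) :=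
    fun g hg i _ => ⟨by linarith [hg.1 b i, hg.2], by linarith [hg.1 i b, hg.2]⟩
  exact isCompact_iff_compactSpace.1
    ((isCompact_univ_pi fun _ => isCompact_Icc).of_isClosed_subset hclosed hsub)

theorem sub_apply_mem_pointedCostLipschitz {g : ι → ℝ} (hg : g ∈ costLipschitz c) (b : ι) :
    (fun i => g i + -g b) ∈ pointedCostLipschitz c b :=
  ⟨add_const_mem_costLipschitz hg _, add_neg_cancel _⟩

/-- The homeomorphism of pointed sets obtained from a cost homeomorphism by renormalizing its
values at the base point. -/
def IsCostHomeo.toPointed {h : (ι → ℝ) ≃ₜ (ι → ℝ)} (hh : IsCostHomeo c' c h) (b : ι) :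
    pointedCostLipschitz c' b ≃ₜ pointedCostLipschitz c b where
  toFun g := ⟨_, sub_apply_mem_pointedCostLipschitz ((hh.mem_iff g).2 g.2.1) b⟩
  invFun g := ⟨_, sub_apply_mem_pointedCostLipschitz ((hh.symm.mem_iff g).2 g.2.1) b⟩
  left_inv g := by
    ext i
    simp [hh.symm.map_add_const, g.2.2]
  right_inv g := by
    ext i
    simp [hh.map_add_const, g.2.2]
  continuous_toFun := by
    have := h.continuous
    exact Continuous.subtype_mk (by fun_prop) _
  continuous_invFun := by
    have := h.symm.continuous
    exact Continuous.subtype_mk (by fun_prop) _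

theorem IsCostHomeo.toPointed_apply {h : (ι → ℝ) ≃ₜ (ι → ℝ)} (hh : IsCostHomeo c' c h)
    (g : pointedCostLipschitz c' b) (i : ι) : (hh.toPointed b g).1 i = h g i - h g b :=
  (sub_eq_add_neg _ _).symm

end Pointed

section CubeCoordinates

variable {c c' : ℕ → ℕ → ℝ} {g g' : ℕ → ℝ} {n N : ℕ}

theorem exists_forall_eq_of_causal {α : Type*} [Nonempty α] (Φ : ℕ → (ℕ → α) → α)
    (hΦ : ∀ n g g', EqOn g g' (Iio n) → Φ n g = Φ n g') : ∃ g : ℕ → α, ∀ n, g n = Φ n g := by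
  classical
  obtain ⟨x⟩ := ‹Nonempty α›
  let step (n : ℕ) (prev : ∀ m < n, α) : α := Φ n fun m => if h : m < n then prev m h else x
  refine ⟨fun n => n.strongRec step, fun n => ?_⟩
  exact (Nat.strongRec_eq step n).trans (hΦ n _ _ fun m hm => dif_pos (mem_Iio.1 hm))

instance (n : ℕ) : Nonempty (Iio (n + 1)) := ⟨⟨0, n.succ_pos⟩⟩

theorem mem_costLipschitzOn_Iio_succ_iff (hc : c (n + 1) (n + 1) = 0) :
    g ∈ costLipschitzOn c (Iio (n + 1 + 1)) ↔ g ∈ costLipschitzOn c (Iio (n + 1)) ∧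
      supConv c (Iio (n + 1)) g (n + 1) ≤ g (n + 1) ∧
      g (n + 1) ≤ infConv c (Iio (n + 1)) g (n + 1) := by
  rw [← mem_costLipschitzOn_insert_iff hc, ← Order.succ_eq_add_one (n + 1),
    Order.Iio_succ_eq_insert]

theorem supConv_Iio_lt_infConv_Iio (hc : IsStrictCost c)
    (hg : g ∈ costLipschitzOn c (Iio (n + 1))) :
    supConv c (Iio (n + 1)) g (n + 1) < infConv c (Iio (n + 1)) g (n + 1) := by
  obtain ⟨σ, hσ, hgap⟩ :=
    exists_pos_forall_supConv_add_le_infConv hc (notMem_Iio.2 (le_refl (n + 1)))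
  exact (lt_add_of_pos_right _ hσ).trans_le (hgap g hg)

theorem costLipschitz_subset_costLipschitzOn {ι : Type*} (c : ι → ι → ℝ) (s : Set ι) :
    costLipschitz c ⊆ costLipschitzOn c s := fun _ hg i _ j _ => hg i j

/-- The position of `g n` in the interval of the values at `n` that are compatible with the
earlier ones, normalized to lie in `[0, 1]`. It carries no information for `n = 0`. -/
noncomputable def relPos (c : ℕ → ℕ → ℝ) (g : ℕ → ℝ) (n : ℕ) : ℝ :=
  (g n - supConv c (Iio n) g n) / (infConv c (Iio n) g n - supConv c (Iio n) g n)

theorem relPos_eq_iff (hc : IsStrictCost c) (hg : g ∈ costLipschitzOn c (Iio (n + 1))) {t : ℝ} :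
    relPos c g (n + 1) = t ↔ g (n + 1) = supConv c (Iio (n + 1)) g (n + 1) +
      t * (infConv c (Iio (n + 1)) g (n + 1) - supConv c (Iio (n + 1)) g (n + 1)) := by
  rw [relPos, div_eq_iff (sub_pos.2 (supConv_Iio_lt_infConv_Iio hc hg)).ne', sub_eq_iff_eq_add']

theorem relPos_mem_Icc (hc : IsStrictCost c) (hg : g ∈ costLipschitz c) (n : ℕ) :
    relPos c g (n + 1) ∈ Icc (0 : ℝ) 1 := by
  have hlt := supConv_Iio_lt_infConv_Iio hc
    (costLipschitz_subset_costLipschitzOn c (Iio (n + 1)) hg)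
  obtain ⟨-, hlower, hupper⟩ := (mem_costLipschitzOn_Iio_succ_iff (hc.self _)).1
    (costLipschitz_subset_costLipschitzOn c (Iio (n + 1 + 1)) hg)
  exact ⟨div_nonneg (sub_nonneg.2 hlower) (sub_pos.2 hlt).le,
    (div_le_one (sub_pos.2 hlt)).2 (sub_le_sub_right hupper _)⟩

theorem continuousOn_relPos (hc : IsStrictCost c) (n : ℕ) :
    ContinuousOn (fun g => relPos c g (n + 1)) (costLipschitz c) := by
  refine ContinuousOn.div (by fun_prop) (by fun_prop) fun g hg => ?_
  exact (sub_pos.2 (supConv_Iio_lt_infConv_Iio hc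
    (costLipschitz_subset_costLipschitzOn c _ hg))).ne'

theorem eq_of_relPos_eq (hc : IsStrictCost c) (hg : g ∈ costLipschitz c)
    (hg' : g' ∈ costLipschitz c) (h : EqOn g g' (Iio (N + 1)))
    (hpos : ∀ n ≥ N, relPos c g (n + 1) = relPos c g' (n + 1)) : g = g' := by
  funext n
  induction n using Nat.strong_induction_on with
  | _ n ih =>
    rcases Nat.lt_or_ge n (N + 1) with hn | hn
    · exact h hn
    obtain ⟨n, rfl⟩ := Nat.exists_eq_add_of_lt (Nat.succ_le_iff.1 hn)
    have heq : EqOn g g' (Iio (N + n + 1)) := ih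
    have hvalue := (relPos_eq_iff hc (costLipschitz_subset_costLipschitzOn c _ hg)).1
      (hpos (N + n) (Nat.le_add_right N n))
    rw [supConv_congr heq, infConv_congr heq] at hvalue
    exact hvalue.trans
      ((relPos_eq_iff hc (costLipschitz_subset_costLipschitzOn c _ hg')).1 rfl).symm

theorem exists_mem_costLipschitz_relPos_eq (hc : IsStrictCost c) {u t : ℕ → ℝ}
    (hu : u ∈ costLipschitzOn c (Iio (N + 1))) (ht : ∀ n, t n ∈ Icc (0 : ℝ) 1) :
    ∃ g ∈ costLipschitz c, EqOn g u (Iio (N + 1)) ∧ ∀ n ≥ N, relPos c g (n + 1) = t n := by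
  classical
  obtain ⟨g, hg⟩ := exists_forall_eq_of_causal (fun n g => if n < N + 1 then u n else
    supConv c (Iio n) g n + t (n - 1) * (infConv c (Iio n) g n - supConv c (Iio n) g n))
    fun n g g' h => by rw [supConv_congr h, infConv_congr h]
  have hgu : EqOn g u (Iio (N + 1)) := fun n hn => (hg n).trans (if_pos hn)
  have hstep (n : ℕ) (hn : N ≤ n) : g (n + 1) = supConv c (Iio (n + 1)) g (n + 1) +
      t n * (infConv c (Iio (n + 1)) g (n + 1) - supConv c (Iio (n + 1)) g (n + 1)) :=
    (hg (n + 1)).trans (if_neg (by omega))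
  have hlip (n : ℕ) (hn : N ≤ n) : g ∈ costLipschitzOn c (Iio (n + 1)) := by
    induction n, hn using Nat.le_induction with
    | base => exact fun i hi j hj => by rw [hgu hi, hgu hj]; exact hu i hi j hj
    | succ n hn ih =>
      have hgap := (supConv_Iio_lt_infConv_Iio hc ih).le
      obtain ⟨ht₀, ht₁⟩ := ht n
      refine (mem_costLipschitzOn_Iio_succ_iff (hc.self _)).2 ⟨ih, ?_, ?_⟩ <;> rw [hstep n hn] <;>
        nlinarith
  refine ⟨g, fun i j => ?_, hgu, fun n hn => (relPos_eq_iff hc (hlip n hn)).2 (hstep n hn)⟩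
  exact hlip (N + i + j) (by omega) i (mem_Iio.2 (by omega)) j (mem_Iio.2 (by omega))

/-- The truncation of a pointed sequence to its first `N + 1` terms. -/
def truncatePointed (c : ℕ → ℕ → ℝ) (N : ℕ) (g : pointedCostLipschitz c 0) :
    pointedCostLipschitz (fun i j : Fin (N + 1) => c i j) 0 :=
  ⟨fun i => g.1 i, fun i j => g.2.1 i j, g.2.2⟩

theorem continuous_truncatePointed (c : ℕ → ℕ → ℝ) (N : ℕ) : Continuous (truncatePointed c N) := by
  have h : Continuous fun (g : pointedCostLipschitz c 0) (i : Fin (N + 1)) => g.1 i :=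
    continuous_pi fun i => (continuous_apply (i : ℕ)).comp continuous_subtype_val
  exact h.subtype_mk _

theorem exists_homeomorph_truncatePointed_prod (hc : IsStrictCost c) (N : ℕ) :
    ∃ H : pointedCostLipschitz c 0 ≃ₜ
        pointedCostLipschitz (fun i j : Fin (N + 1) => c i j) 0 × (ℕ → Icc (0 : ℝ) 1),
      ∀ g, (H g).1 = truncatePointed c N g := by
  let F (g : pointedCostLipschitz c 0) :
      pointedCostLipschitz (fun i j : Fin (N + 1) => c i j) 0 × (ℕ → Icc (0 : ℝ) 1) :=
    (truncatePointed c N g, fun k => ⟨_, relPos_mem_Icc hc g.2.1 (N + k)⟩)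
  have hcont : Continuous F := by
    refine .prodMk (continuous_truncatePointed c N) (continuous_pi fun k => .subtype_mk ?_ _)
    exact (continuousOn_relPos hc (N + k)).comp_continuous continuous_subtype_val fun g => g.2.1
  have hinj : Function.Injective F := by
    intro g g' h
    have htrunc := congrArg (fun z => z.1.1) h
    have hpos := congrArg Prod.snd h
    refine Subtype.ext (eq_of_relPos_eq (N := N) hc g.2.1 g'.2.1 ?_ fun n hn => ?_)
    · exact fun i hi => congrFun htrunc ⟨i, hi⟩
    · obtain ⟨k, rfl⟩ := Nat.exists_eq_add_of_le hn
      exact congrArg Subtype.val (congrFun hpos k)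
  have hsurj : Function.Surjective F := by
    rintro ⟨v, τ⟩
    have hv : (fun n => v.1 (Fin.ofNat (N + 1) n)) ∈ costLipschitzOn c (Iio (N + 1)) := by
      intro i hi j hj
      lift i to Fin (N + 1) using hi
      lift j to Fin (N + 1) using hj
      simpa only [Fin.ofNat_eq_cast, Fin.cast_val_eq_self] using v.2.1 i j
    obtain ⟨g, hg, hgv, hgτ⟩ :=
      exists_mem_costLipschitz_relPos_eq (t := fun n => τ (n - N)) hc hv fun n => (τ (n - N)).2
    have hgv' (i : Fin (N + 1)) : g i = v.1 i := by
      simpa only [Fin.ofNat_eq_cast, Fin.cast_val_eq_self] using hgv i.2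
    refine ⟨⟨g, hg, (hgv' 0).trans v.2.2⟩, Prod.ext (Subtype.ext (funext hgv')) ?_⟩
    refine funext fun k => Subtype.ext ((hgτ (N + k) (Nat.le_add_right N k)).trans ?_)
    simp only [Nat.add_sub_cancel_left]
  exact ⟨hcont.homeoOfEquivCompactToT2 (f := .ofBijective F ⟨hinj, hsurj⟩), fun _ => rfl⟩

theorem nonempty_homeomorph_pointedCostLipschitz_cube (hc : IsStrictCost c) :
    Nonempty (pointedCostLipschitz c 0 ≃ₜ (ℕ → Icc (0 : ℝ) 1)) := by
  obtain ⟨H, -⟩ := exists_homeomorph_truncatePointed_prod hc 0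
  have : Subsingleton (Fin (0 + 1)) := Fin.subsingleton_one
  have : Unique (pointedCostLipschitz (fun i j : Fin (0 + 1) => c i j) 0) :=
    { default := ⟨0, fun i j => by simp [hc.self], rfl⟩
      uniq g := Subtype.ext (funext fun i =>
        (congrArg g.1 (Subsingleton.elim i 0)).trans g.2.2) }
  exact ⟨H.trans (Homeomorph.uniqueProd _ _)⟩

theorem exists_homeomorph_truncatePointed_eq (hc' : IsStrictCost c') (hc : IsStrictCost c)
    (h : pointedCostLipschitz (fun i j : Fin (N + 1) => c' i j) 0 ≃ₜ
      pointedCostLipschitz (fun i j : Fin (N + 1) => c i j) 0) :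
    ∃ H : pointedCostLipschitz c' 0 ≃ₜ pointedCostLipschitz c 0,
      ∀ g, truncatePointed c N (H g) = h (truncatePointed c' N g) := by
  obtain ⟨S', hS'⟩ := exists_homeomorph_truncatePointed_prod hc' N
  obtain ⟨S, hS⟩ := exists_homeomorph_truncatePointed_prod hc N
  refine ⟨(S'.trans (h.prodCongr (.refl _))).trans S.symm, fun g => ?_⟩
  simp [← hS, ← hS']

end CubeCoordinates

section Idempotent

variable {X : Type*} [TopologicalSpace X] {μ : C(X, ℝ) → ℝ} {φ ψ : C(X, ℝ)}

theorem IsIdemMeasure.monotone (h : IsIdemMeasure μ) : Monotone μ := fun φ ψ hle =>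
  sup_eq_right.1 ((h.2.2 φ ψ).symm.trans (congrArg μ (sup_eq_right.2 hle)))

theorem IsIdemMeasure.apply_le_add (h : IsIdemMeasure μ) {x : ℝ} (hle : ∀ z, φ z ≤ x + ψ z) :
    μ φ ≤ x + μ ψ :=
  (h.monotone (show φ ≤ .const X x + ψ from hle)).trans_eq (h.2.1 x ψ)

theorem IsIdemMeasure.exists_apply_le_add (h : IsIdemMeasure μ) {κ : Type*} [Finite κ] [Nonempty κ]
    {f : κ → C(X, ℝ)} {x : κ → ℝ} (hle : ∀ z, ∃ k, ψ z ≤ x k + f k z) :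
    ∃ k, μ ψ ≤ x k + μ (f k) := by
  cases nonempty_fintype κ
  let F (k : κ) : C(X, ℝ) := .const X (x k) + f k
  have hψ : ψ ≤ Finset.univ.sup' Finset.univ_nonempty F := fun z =>
    have ⟨k, hk⟩ := hle z
    hk.trans (Finset.le_sup' F (Finset.mem_univ k) z)
  obtain ⟨k, -, hk⟩ := Finset.exists_mem_eq_sup' Finset.univ_nonempty (μ ∘ F)
  refine ⟨k, (h.monotone hψ).trans_eq ?_⟩
  rw [Finset.apply_sup'_eq_sup'_comp _ μ h.2.2, hk, Function.comp_apply, h.2.1]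

theorem isClosed_setOf_isIdemMeasure : IsClosed {μ : C(X, ℝ) → ℝ | IsIdemMeasure μ} := by
  simp only [IsIdemMeasure, ofPred_and, ofPred_forall]
  refine .inter ?_ (.inter ?_ ?_)
  · exact isClosed_iInter fun x => isClosed_eq (by fun_prop) (by fun_prop)
  · exact isClosed_iInter fun x => isClosed_iInter fun φ => isClosed_eq (by fun_prop) (by fun_prop)
  · exact isClosed_iInter fun φ => isClosed_iInter fun ψ => isClosed_eq (by fun_prop) (by fun_prop)

variable [CompactSpace X]

theorem IsIdemMeasure.lipschitzWith_one (h : IsIdemMeasure μ) : LipschitzWith 1 μ := by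
  refine LipschitzWith.of_le_add fun φ ψ => ?_
  rw [add_comm]
  refine h.apply_le_add fun z => ?_
  have := (Real.dist_eq _ _).ge.trans (ContinuousMap.dist_apply_le_dist (f := φ) (g := ψ) z)
  linarith [le_abs_self (φ z - ψ z)]

instance : CompactSpace (IdemMeasure X) := by
  have hsub : {μ : C(X, ℝ) → ℝ | IsIdemMeasure μ} ⊆ univ.pi fun φ => Icc (-‖φ‖) ‖φ‖ := by
    intro μ (h : IsIdemMeasure μ) φ _
    have h₀ : μ 0 = 0 := h.1 0
    rw [mem_Icc, ← abs_le, ← Real.norm_eq_abs]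
    simpa [h₀] using h.lipschitzWith_one.norm_sub_le φ 0
  exact isCompact_iff_compactSpace.1 ((isCompact_univ_pi fun _ => isCompact_Icc).of_isClosed_subset
    isClosed_setOf_isIdemMeasure hsub)

theorem isIdemMeasure_iSup_sub_iSup {ι : Type*} [Nonempty ι] (x : ι → X) {g : ι → ℝ}
    (hg : BddAbove (range g)) : IsIdemMeasure fun φ => (⨆ i, (g i + φ (x i))) - ⨆ i, g i := by
  have hbdd (φ : C(X, ℝ)) : BddAbove (range fun i => g i + φ (x i)) := by
    obtain ⟨M, hM⟩ := hg
    exact ⟨M + ‖φ‖, forall_mem_range.2 fun i =>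
      add_le_add (hM ⟨i, rfl⟩) ((le_abs_self _).trans (φ.norm_coe_le_norm _))⟩
  refine ⟨fun t => ?_, fun t φ => ?_, fun φ ψ => ?_⟩
  · simp only [ContinuousMap.const_apply, ← ciSup_add hg, add_sub_cancel_left]
  · simp only [ContinuousMap.add_apply, ContinuousMap.const_apply, add_left_comm (_ : ℝ) t,
      ← add_ciSup (hbdd φ), add_sub_assoc]
  · simp only [ContinuousMap.sup_apply, ← max_add_add_left, max_sub_sub_right]
    rw [ciSup_sup_eq (hbdd φ) (hbdd ψ)]

end Idempotent

section Profile

variable {X : Type*}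

theorem exists_metricSpace_isStrictCost_dist (X : Type*) [t : TopologicalSpace X]
    [TopologicalSpace.MetrizableSpace X] :
    ∃ m : MetricSpace X, m.toUniformSpace.toTopologicalSpace = t ∧
      IsStrictCost (dist : X → X → ℝ) := by
  let := TopologicalSpace.metrizableSpaceMetric X
  let e : X → Metric.Snowflaking X (1 / 2) one_half_pos one_half_lt_one.le :=
    Metric.Snowflaking.toSnowflaking
  have he : IsEmbedding e := Metric.Snowflaking.homeomorph.symm.isEmbedding
  have hdist (x y : X) : dist (e x) (e y) = √(dist x y) := by
    rw [Real.sqrt_eq_rpow]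
    exact Metric.Snowflaking.dist_toSnowflaking_toSnowflaking x y
  refine ⟨he.comapMetricSpace e, rfl, fun x => dist_self (e x), fun {x y z} hyx hyz => ?_⟩
  change dist (e x) (e z) < dist (e x) (e y) + dist (e y) (e z)
  have hxy : 0 < √(dist x y) := Real.sqrt_pos.2 (dist_pos.2 hyx.symm)
  have hyz : 0 < √(dist y z) := Real.sqrt_pos.2 (dist_pos.2 hyz)
  simp only [hdist]
  rw [Real.sqrt_lt' (add_pos hxy hyz), add_sq, Real.sq_sqrt dist_nonneg, Real.sq_sqrt dist_nonneg]
  nlinarith [dist_triangle x y z, mul_pos hxy hyz]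

theorem exists_injective_denseRange_nat (X : Type*) [TopologicalSpace X] [T1Space X]
    [TopologicalSpace.SeparableSpace X] [Infinite X] :
    ∃ x : ℕ → X, Function.Injective x ∧ DenseRange x := by
  obtain ⟨s, hcount, hdense⟩ := TopologicalSpace.exists_countable_dense X
  have : Countable s := hcount.to_subtype
  have : Infinite s := by
    refine Set.infinite_coe_iff.2 fun hfin => infinite_univ (α := X) ?_
    rwa [← hdense.closure_eq, hfin.isClosed.closure_eq]
  obtain ⟨e⟩ := nonempty_equiv_of_countable (α := ℕ) (β := s)
  refine ⟨Subtype.val ∘ e, Subtype.val_injective.comp e.injective, ?_⟩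
  rwa [DenseRange, e.surjective.range_comp, Subtype.range_coe]

theorem dense_setOf_exists_lipschitzWith [MetricSpace X] [CompactSpace X] :
    Dense {φ : C(X, ℝ) | ∃ l, LipschitzWith l φ} := by
  rw [dense_iff_closure_eq]
  refine ContinuousMap.sublattice_closure_eq_top _ ⟨0, 0, .const 0⟩ ?_ ?_ fun v x y => ?_
  · exact fun φ ⟨l, hφ⟩ ψ ⟨k, hψ⟩ => ⟨max l k, hφ.min hψ⟩
  · exact fun φ ⟨l, hφ⟩ ψ ⟨k, hψ⟩ => ⟨max l k, hφ.max hψ⟩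
  · refine ⟨⟨fun z => v x + (v y - v x) / dist x y * dist x z, by fun_prop⟩,
      ⟨0 + ‖(v y - v x) / dist x y‖₊ * 1, ?_⟩, ?_, ?_⟩
    · exact (LipschitzWith.const (v x)).add
        ((lipschitzWith_smul ((v y - v x) / dist x y)).comp (LipschitzWith.dist_right x))
    · simp
    · have h (hxy : dist x y = 0) : v y - v x = 0 := by rw [dist_eq_zero.1 hxy, sub_self]
      simp [div_mul_cancel_of_imp h]

theorem eventually_atTop_forall_exists_dist_lt [MetricSpace X] [CompactSpace X] {x : ℕ → X}
    (hx : DenseRange x) {δ : ℝ} (hδ : 0 < δ) :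
    ∀ᶠ N in atTop, ∀ z, ∃ i : Fin (N + 1), dist (x i) z < δ := by
  have hmono : Monotone fun N => ⋃ i : Fin (N + 1), Metric.ball (x i) δ := fun N M hNM =>
    iUnion_subset fun i => subset_iUnion_of_subset (Fin.castLE (by omega) i) subset_rfl
  have hcover : univ ⊆ ⋃ N, ⋃ i : Fin (N + 1), Metric.ball (x i) δ := fun z _ => by
    obtain ⟨n, hn⟩ := hx.exists_dist_lt z hδ
    exact mem_iUnion₂.2 ⟨n, Fin.last n, hn⟩
  obtain ⟨N, hN⟩ := isCompact_univ.elim_directed_cover _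
    (fun N => isOpen_iUnion fun i => Metric.isOpen_ball) hcover hmono.directed_le
  filter_upwards [eventually_ge_atTop N] with M hM z
  obtain ⟨i, hi⟩ := mem_iUnion.1 (hmono hM (hN (mem_univ z)))
  exact ⟨i, by rwa [dist_comm]⟩

variable [MetricSpace X] {l l' : ℝ≥0} {μ : C(X, ℝ) → ℝ} {φ : C(X, ℝ)}

/-- The cone `z ↦ -l d(a, z)` of slope `l` with apex `a`, the `l`-Lipschitz approximation from
below of the function that is `0` at `a` and `-∞` elsewhere. -/
def cone (l : ℝ≥0) (a : X) : C(X, ℝ) where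
  toFun z := -(l * dist a z)

theorem cone_apply (l : ℝ≥0) (a z : X) : cone l a z = -(l * dist a z) := rfl

theorem IsIdemMeasure.apply_cone_sub_apply_cone_le (h : IsIdemMeasure μ) (l : ℝ≥0) (a b : X) :
    μ (cone l a) - μ (cone l b) ≤ l * dist a b := by
  refine sub_le_iff_le_add.2 (h.apply_le_add fun z => ?_)
  rw [cone_apply, cone_apply, dist_comm a b]
  linarith [mul_le_mul_of_nonneg_left (dist_triangle b a z) l.coe_nonneg]

theorem IsIdemMeasure.add_apply_cone_le (h : IsIdemMeasure μ) (hφ : LipschitzWith l φ) (a : X) :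
    φ a + μ (cone l a) ≤ μ φ := by
  rw [← le_sub_iff_add_le', sub_eq_neg_add]
  refine h.apply_le_add fun z => ?_
  rw [cone_apply]
  linarith [hφ.dist_le_mul a z, Real.dist_eq (φ a) (φ z), le_abs_self (φ a - φ z)]

theorem IsIdemMeasure.apply_eq_iSup_of_lipschitzWith [CompactSpace X] (h : IsIdemMeasure μ)
    (hφ : LipschitzWith l φ) {x : ℕ → X} (hx : DenseRange x) :
    μ φ = ⨆ i, (φ (x i) + μ (cone l (x i))) := by
  have hle (i : ℕ) : φ (x i) + μ (cone l (x i)) ≤ μ φ := h.add_apply_cone_le hφ (x i)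
  refine le_antisymm (le_of_forall_pos_le_add fun ε hε => ?_) (ciSup_le hle)
  have hl : 0 < 2 * (l + 1 : ℝ) := by positivity
  obtain ⟨N, hN⟩ := (eventually_atTop_forall_exists_dist_lt hx (div_pos hε hl)).exists
  obtain ⟨i, hi⟩ := h.exists_apply_le_add (ψ := φ) (f := fun i : Fin (N + 1) => cone l (x i))
    (x := fun i => φ (x i) + ε) fun z => by
      obtain ⟨i, hi⟩ := hN z
      refine ⟨i, ?_⟩
      rw [cone_apply]
      rw [lt_div_iff₀ hl] at hi
      have := hφ.dist_le_mul z (x i)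
      rw [Real.dist_eq, dist_comm] at this
      nlinarith [le_abs_self (φ z - φ (x i)), dist_nonneg (x := x i) (y := z)]
  have := le_ciSup (f := fun i => φ (x i) + μ (cone l (x i)))
    ⟨_, forall_mem_range.2 hle⟩ (i : ℕ)
  linarith

/-- The values of an idempotent measure on the cones of slope `l` with apices `x i`, normalized to
vanish at the base point `b`. -/
def profile {κ : Type*} (x : κ → X) (b : κ) (l : ℝ≥0) :
    C(IdemMeasure X, pointedCostLipschitz (fun i j => l * dist (x i) (x j)) b) where
  toFun μ := ⟨_, sub_apply_mem_pointedCostLipschitz (g := fun i => μ.1 (cone l (x i)))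
    (fun i j => μ.2.apply_cone_sub_apply_cone_le l (x i) (x j)) b⟩
  continuous_toFun := by
    have h (a : X) : Continuous fun μ : IdemMeasure X => μ.1 (cone l a) :=
      (continuous_apply _).comp continuous_subtype_val
    exact Continuous.subtype_mk (continuous_pi fun i => (h (x i)).add (h (x b)).neg) _

theorem profile_apply {κ : Type*} (x : κ → X) (b : κ) (l : ℝ≥0) (μ : IdemMeasure X) (i : κ) :
    (profile x b l μ).1 i = μ.1 (cone l (x i)) - μ.1 (cone l (x b)) := (sub_eq_add_neg _ _).symm

theorem profile_surjective [CompactSpace X] {κ : Type*} (x : κ → X) (b : κ) (l : ℝ≥0) :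
    Function.Surjective (profile x b l) := by
  intro g
  have hbdd : BddAbove (range g.1) := by
    refine ⟨l * Metric.diam (univ : Set X), forall_mem_range.2 fun i => ?_⟩
    have hdiam : dist (x i) (x b) ≤ Metric.diam univ :=
      Metric.dist_le_diam_of_mem isCompact_univ.isBounded (mem_univ _) (mem_univ _)
    linarith [g.2.1 i b, g.2.2, mul_le_mul_of_nonneg_left hdiam l.coe_nonneg]
  have : Nonempty κ := ⟨b⟩
  have hcone (k : κ) : ⨆ i, (g.1 i + cone l (x k) (x i)) = g.1 k := by
    refine IsGreatest.csSup_eq ⟨⟨k, ?_⟩, forall_mem_range.2 fun i => ?_⟩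
    · simp only [cone_apply, dist_self, mul_zero, neg_zero, add_zero]
    · rw [cone_apply, dist_comm]
      linarith [g.2.1 i k]
  refine ⟨⟨_, isIdemMeasure_iSup_sub_iSup x hbdd⟩, Subtype.ext (funext fun i => ?_)⟩
  simp only [profile_apply, hcone, g.2.2, sub_sub_sub_cancel_right, sub_zero]

theorem eq_of_profile_eq [CompactSpace X] {x : ℕ → X} (hx : DenseRange x) {b : ℕ}
    {μ ν : IdemMeasure X} (h : profile x b l μ = profile x b l ν) (hφ : LipschitzWith l φ) :
    μ.1 φ = ν.1 φ := by
  obtain ⟨d, hd⟩ : ∃ d, ∀ i, μ.1 (cone l (x i)) = ν.1 (cone l (x i)) + d := by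
    refine ⟨μ.1 (cone l (x b)) - ν.1 (cone l (x b)), fun i => ?_⟩
    have hi := congrFun (congrArg Subtype.val h) i
    rw [profile_apply, profile_apply] at hi
    linarith
  have hshift {ψ : C(X, ℝ)} (hψ : LipschitzWith l ψ) : μ.1 ψ = ν.1 ψ + d := by
    rw [μ.2.apply_eq_iSup_of_lipschitzWith hψ hx, ν.2.apply_eq_iSup_of_lipschitzWith hψ hx,
      ciSup_add ⟨_, forall_mem_range.2 fun i => ν.2.add_apply_cone_le hψ (x i)⟩]
    simp only [hd, add_assoc]
  have hd₀ : d = 0 := by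
    have h₀ := hshift (ψ := .const X 0) ((LipschitzWith.const (0 : ℝ)).weaken l.2)
    rwa [μ.2.1, ν.2.1, zero_add, eq_comm] at h₀
  rw [hshift hφ, hd₀, add_zero]

theorem eq_of_forall_profile_eq [CompactSpace X] {x : ℕ → X} (hx : DenseRange x) {b : ℕ}
    {L : ℕ → ℝ≥0} (hL : Tendsto L atTop atTop) {μ ν : IdemMeasure X}
    (h : ∀ n, profile x b (L n) μ = profile x b (L n) ν) : μ = ν := by
  refine Subtype.ext (Continuous.ext_on dense_setOf_exists_lipschitzWith
    μ.2.lipschitzWith_one.continuous ν.2.lipschitzWith_one.continuous ?_)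
  rintro φ ⟨l, hφ⟩
  obtain ⟨n, hn⟩ := (hL.eventually_ge_atTop l).exists
  exact eq_of_profile_eq hx (h n) (hφ.weaken hn)

end Profile

section ProfileApproximation

variable {X : Type*} [MetricSpace X] {l l' : ℝ≥0} {δ ε : ℝ}

theorem abs_supConv_apply_cone_sub_apply_cone_le {κ : Type*} [Finite κ] {y : κ → X}
    (hy : ∀ z, ∃ k, dist (y k) z ≤ δ) (hll' : l ≤ l') {μ : C(X, ℝ) → ℝ} (h : IsIdemMeasure μ)
    (i : κ) :
    |supConv (fun i j => l * dist (y i) (y j)) univ (fun k => μ (cone l' (y k))) i -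
      μ (cone l (y i))| ≤ (l + l') * δ := by
  have hll'_coe : (l : ℝ) ≤ l' := NNReal.coe_le_coe.2 hll'
  have : Nonempty κ := ⟨i⟩
  have hδ : 0 ≤ (l + l') * δ := by
    obtain ⟨k, hk⟩ := hy (y i)
    exact mul_nonneg (add_nonneg l.coe_nonneg l'.coe_nonneg) (dist_nonneg.trans hk)
  refine abs_sub_le_iff.2 ⟨sub_le_iff_le_add.2 (supConv_le_iff.2 fun k _ => ?_), ?_⟩
  · have hle : μ (cone l' (y k)) ≤ l * dist (y k) (y i) + μ (cone l (y i)) :=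
      h.apply_le_add fun z => by
        rw [cone_apply, cone_apply]
        linarith [mul_le_mul_of_nonneg_left (dist_triangle_left (y i) z (y k)) l.coe_nonneg,
          mul_le_mul_of_nonneg_right hll'_coe (dist_nonneg (x := y k) (y := z))]
    linarith
  · obtain ⟨k, hk⟩ := h.exists_apply_le_add (ψ := cone l (y i)) (f := fun k => cone l' (y k))
      (x := fun k => (l + l') * δ - l * dist (y k) (y i)) fun z => by
        obtain ⟨k, hk⟩ := hy z
        refine ⟨k, ?_⟩
        rw [cone_apply, cone_apply, dist_comm (y i) z]
        linarith [mul_le_mul_of_nonneg_left (dist_triangle (y k) z (y i)) l.coe_nonneg,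
          mul_le_mul_of_nonneg_left hk (add_nonneg l.coe_nonneg l'.coe_nonneg)]
    linarith [sub_le_supConv (c := fun i j => l * dist (y i) (y j))
      (g := fun k => μ (cone l' (y k))) (j := i) (mem_univ k)]

theorem exists_homeomorph_abs_profile_sub_le_of_finite {κ : Type*} [Finite κ] [Nontrivial κ]
    {y : κ → X} (hy : ∀ z, ∃ k, dist (y k) z ≤ δ) (b : κ)
    (hdist : IsStrictCost fun i j => dist (y i) (y j)) (hl : 0 < l) (hll' : l ≤ l') (hε : 0 < ε) :
    ∃ h : pointedCostLipschitz (fun i j => l' * dist (y i) (y j)) b ≃ₜ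
        pointedCostLipschitz (fun i j => l * dist (y i) (y j)) b,
      ∀ μ i, |(h (profile y b l' μ)).1 i - (profile y b l μ).1 i| ≤ 2 * ((l + l') * δ) + ε := by
  obtain ⟨h, hh, hnear⟩ := SupConvNearHomeo.const_mul hdist (fun _ _ => dist_nonneg)
    (NNReal.coe_pos.2 hl) (NNReal.coe_le_coe.2 hll') (ε / 2) (half_pos hε)
  refine ⟨hh.toPointed b, fun μ i => ?_⟩
  have hclose (k : κ) : |h (fun j => μ.1 (cone l' (y j))) k - μ.1 (cone l (y k))| ≤
      ε / 2 + (l + l') * δ :=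
    (abs_sub_le _ _ _).trans <| add_le_add
      (hnear _ (fun i j => μ.2.apply_cone_sub_apply_cone_le l' (y i) (y j)) k)
      (abs_supConv_apply_cone_sub_apply_cone_le hy hll' μ.2 k)
  have hprofile : (profile y b l' μ).1 = fun j => μ.1 (cone l' (y j)) + -μ.1 (cone l' (y b)) := rfl
  rw [hh.toPointed_apply, hprofile, hh.map_add_const, profile_apply, add_sub_add_right_eq_sub,
    sub_sub_sub_comm]
  linarith [abs_sub (h (fun j => μ.1 (cone l' (y j))) i - μ.1 (cone l (y i)))
    (h (fun j => μ.1 (cone l' (y j))) b - μ.1 (cone l (y b))), hclose i, hclose b]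

variable [CompactSpace X] {x : ℕ → X}

theorem exists_homeomorph_abs_profile_sub_le (hx : DenseRange x)
    (hdist : IsStrictCost fun i j => dist (x i) (x j)) (hl : 0 < l) (hll' : l ≤ l') (hε : 0 < ε) :
    ∃ H : pointedCostLipschitz (fun i j => l' * dist (x i) (x j)) 0 ≃ₜ
        pointedCostLipschitz (fun i j => l * dist (x i) (x j)) 0,
      ∀ μ k, |(H (profile x 0 l' μ)).1 k - (profile x 0 l μ).1 k| ≤ ε := by
  have hl' : 0 < l' := hl.trans_le hll'
  let δ : ℝ := ε / (5 * (l + l'))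
  have hδ : (l + l') * δ = ε / 5 := by
    simp only [δ]
    field_simp
  obtain ⟨N, hnet, hN⟩ :=
    ((eventually_atTop_forall_exists_dist_lt hx (show 0 < δ by positivity)).and
      (eventually_ge_atTop 1)).exists
  have : Nontrivial (Fin (N + 1)) := Fin.nontrivial_iff_two_le.2 (by omega)
  obtain ⟨h, hh⟩ := exists_homeomorph_abs_profile_sub_le_of_finite
    (y := fun i : Fin (N + 1) => x i) (fun z => (hnet z).imp fun _ => le_of_lt) 0
    (hdist.comp Fin.val_injective) hl hll' (show 0 < ε / 5 by positivity)
  obtain ⟨H, hH⟩ := exists_homeomorph_truncatePointed_eq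
    (hdist.const_mul (NNReal.coe_pos.2 hl')) (hdist.const_mul (NNReal.coe_pos.2 hl)) h
  refine ⟨H, fun μ k => ?_⟩
  obtain ⟨i, hi⟩ := hnet (x k)
  have hstage : |(H (profile x 0 l' μ)).1 i - (profile x 0 l μ).1 i| ≤ 2 * (ε / 5) + ε / 5 := by
    have hHi : (H (profile x 0 l' μ)).1 i =
        (h (profile (fun i : Fin (N + 1) => x i) 0 l' μ)).1 i :=
      congrFun (congrArg Subtype.val (hH _)) i
    rw [hHi, ← hδ]
    exact hδ ▸ hh μ i
  have hosc (g : pointedCostLipschitz (fun i j => l * dist (x i) (x j)) 0) :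
      |g.1 k - g.1 i| ≤ ε / 5 := by
    have hlδ : l * dist (x i) (x k) ≤ ε / 5 := by
      rw [← hδ]
      gcongr
      exact le_add_of_nonneg_right l'.coe_nonneg
    rw [abs_sub_le_iff]
    exact ⟨(g.2.1 k i).trans (by beta_reduce; rwa [dist_comm]), (g.2.1 i k).trans hlδ⟩
  have hH_osc := abs_le.1 (hosc (H (profile x 0 l' μ)))
  have hosc := abs_le.1 (hosc (profile x 0 l μ))
  have hstage := abs_le.1 hstage
  exact abs_le.2 ⟨by linarith, by linarith⟩

theorem mem_closure_of_forall_exists_abs_le {Y ι : Type*} [TopologicalSpace Y]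
    {Q : Set (ι → ℝ)} {p : C(Y, Q)} {𝓕 : Set C(Y, Q)}
    (h : ∀ ε > 0, ∃ f ∈ 𝓕, ∀ y i, |(f y).1 i - (p y).1 i| ≤ ε) : p ∈ closure 𝓕 := by
  choose f hf hfp using fun m : ℕ => h (1 / ((m : ℝ) + 1)) Nat.one_div_pos_of_nat
  refine mem_closure_of_tendsto (b := atTop) (f := f) ?_ (.of_forall hf)
  refine ContinuousMap.tendsto_of_tendstoLocallyUniformly
    (TendstoUniformly.tendstoLocallyUniformly ?_)
  rw [tendstoUniformly_iff_tendsto, uniformity_subtype, tendsto_comap_iff, Pi.uniformity,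
    tendsto_iInf]
  intro i
  have hi : TendstoUniformly (fun m y => (f m y).1 i) (fun y => (p y).1 i) atTop := by
    rw [Metric.tendstoUniformly_iff]
    intro ε hε
    filter_upwards [tendsto_one_div_add_atTop_nhds_zero_nat.eventually (gt_mem_nhds hε)] with m hm y
    rw [dist_comm, Real.dist_eq]
    exact (hfp m y i).trans_lt hm
  exact tendsto_comap_iff.2 (tendstoUniformly_iff_tendsto.1 hi)

theorem profile_mem_closure_homeomorphOrbit (hx : DenseRange x)
    (hdist : IsStrictCost fun i j => dist (x i) (x j)) (hl : 0 < l) (hll' : l ≤ l') :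
    profile x 0 l ∈ closure (homeomorphOrbit (profile x 0 l')
      (pointedCostLipschitz (fun i j => l * dist (x i) (x j)) 0)) := by
  refine mem_closure_of_forall_exists_abs_le fun ε hε => ?_
  obtain ⟨H, hH⟩ := exists_homeomorph_abs_profile_sub_le hx hdist hl hll' hε
  exact ⟨_, ⟨H, rfl⟩, hH⟩

theorem nonempty_homeomorph_idemMeasure_pointedCostLipschitz (hx : DenseRange x)
    (hdist : IsStrictCost fun i j => dist (x i) (x j)) :
    Nonempty (IdemMeasure X ≃ₜ pointedCostLipschitz (fun i j => dist (x i) (x j)) 0) := by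
  obtain ⟨L, hL_zero, hL_pos, hL_mono, hL_tendsto⟩ : ∃ L : ℕ → ℝ≥0,
      L 0 = 1 ∧ (∀ n, 0 < L n) ∧ Monotone L ∧ Tendsto L atTop atTop :=
    ⟨fun n => (n + 1 : ℕ), by simp, fun n => Nat.cast_pos.2 n.succ_pos,
      fun m n h => Nat.cast_le.2 (Nat.succ_le_succ h),
      tendsto_natCast_atTop_atTop.comp (tendsto_add_atTop_nat 1)⟩
  have hcost : (fun i j => dist (x i) (x j)) = fun i j => L 0 * dist (x i) (x j) := by
    simp only [hL_zero, NNReal.coe_one, one_mul]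
  rw [hcost]
  exact nonempty_homeomorph_of_mem_closure_homeomorphOrbit (fun n => profile x 0 (L n))
    (fun n => profile_surjective x 0 (L n))
    (fun μ ν h => eq_of_forall_profile_eq hx hL_tendsto h)
    fun n => profile_mem_closure_homeomorphOrbit hx hdist (hL_pos n) (hL_mono n.le_succ)

end ProfileApproximation

end Development

/-- For an infinite compact metrizable space `X`, the space `I(X)` of
idempotent probability measures with the weak* topology is homeomorphic to the Hilbert cube
`Q = ∏_{i=1}^∞ [0, 1]`. -/
theorem statement12 {X : Type*} [TopologicalSpace X] [CompactSpace X]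
    [TopologicalSpace.MetrizableSpace X] [Infinite X] :
    Nonempty (IdemMeasure X ≃ₜ (ℕ → Set.Icc (0 : ℝ) 1)) := by
  obtain ⟨_, rfl, hdist⟩ := exists_metricSpace_isStrictCost_dist X
  obtain ⟨x, hinj, hx⟩ := exists_injective_denseRange_nat X
  have hcost : IsStrictCost fun i j => dist (x i) (x j) := hdist.comp hinj
  obtain ⟨e⟩ := nonempty_homeomorph_idemMeasure_pointedCostLipschitz hx hcost
  obtain ⟨e'⟩ := nonempty_homeomorph_pointedCostLipschitz_cube hcost
  exact ⟨e.trans e'⟩
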